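/- Let n be a positive integer, t ≥ 0, and f : {-1,1}^n → [-1,1] with |∑_{i=1}^n f̂({i})| ≤ t. Then for every ε with |ε| ≤ 1/√n, we have |E_ε[f] − E_0[f]| ≤ |ε| · (t + |ε| · n). -/

import Mathlib

open Finset

/-- The real sign `±1` associated to a Boolean, encoding `{-1,1}`. -/
noncomputable def sgn (b : Bool) : ℝ := if b then 1 else -1

/-- Fourier coefficient `f̂(S) = 2^{-n} ∑_x f(x) ∏_{i∈S} x_i` of `f : {-1,1}^n → ℝ`. -/
noncomputable def walshCoeff {n : ℕ} (f : (Fin n → Bool) → ℝ) (S : Finset (Fin n)) : ℝ :=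
  (2 ^ n : ℝ)⁻¹ * ∑ x : Fin n → Bool, f x * ∏ i ∈ S, sgn (x i)

/-- Expectation of `f` under `ε`-biased coins:
`E_ε[f] = ∑_x f(x) ∏_i (1 + ε·x_i)/2`. -/
noncomputable def biasedExp {n : ℕ} (f : (Fin n → Bool) → ℝ) (ε : ℝ) : ℝ :=
  ∑ x : Fin n → Bool, f x * ∏ i : Fin n, (1 + ε * sgn (x i)) / 2

/-!
Expanding the product density gives `E_ε[f] = ∑_S ε^|S| f̂(S)`. The empty set contributes `E_0[f]`
and the singletons contribute `ε ∑_i f̂({i})`. By Cauchy–Schwarz and Parseval, the square of what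
remains is at most the mean square of `f` times
`∑_{|S| ≥ 2} ε^{2|S|} = (1 + ε²)^n - 1 - nε² ≤ exp (nε²) - 1 - nε²`,
which is at most `(nε²)²` when `nε² ≤ 1`.
-/

section Finset

variable {ι : Type*} [Fintype ι]

lemma sum_finset_eq_empty_add_singleton_add_two_le_card {M : Type*} [AddCommMonoid M]
    (g : Finset ι → M) :
    ∑ S, g S = g ∅ + ∑ i, g {i} + ∑ S with 2 ≤ #S, g S := by
  have card_zero : ({S | #S < 2 ∧ #S = 0} : Finset (Finset ι)) = {∅} := by
    ext S
    simp +contextual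
  have card_one : ({S | #S < 2 ∧ #S ≠ 0} : Finset (Finset ι)) =
      univ.map ⟨singleton, singleton_injective⟩ := by
    ext S
    have card_iff : #S < 2 ∧ #S ≠ 0 ↔ #S = 1 := by lia
    simp only [mem_filter_univ, card_iff, card_eq_one, mem_map, mem_univ, true_and,
      Function.Embedding.coeFn_mk, eq_comm]
  rw [← sum_filter_add_sum_filter_not univ (fun S : Finset ι ↦ #S < 2) g,
    ← sum_filter_add_sum_filter_not {S : Finset ι | #S < 2} (fun S ↦ #S = 0) g,
    filter_filter, filter_filter, card_zero, card_one]
  simp only [sum_singleton, sum_map, Function.Embedding.coeFn_mk, not_lt]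

lemma sum_pow_card_two_le_card {R : Type*} [CommRing R] (a : R) :
    ∑ S : Finset ι with 2 ≤ #S, a ^ #S =
      (1 + a) ^ Fintype.card ι - 1 - Fintype.card ι * a := by
  have total : ∑ S : Finset ι, a ^ #S = (1 + a) ^ Fintype.card ι := by
    simpa [add_comm] using Fintype.sum_pow_mul_eq_add_pow ι a 1
  have split := sum_finset_eq_empty_add_singleton_add_two_le_card fun S : Finset ι ↦ a ^ #S
  simp only [card_empty, pow_zero, card_singleton, pow_one, sum_const, card_univ,
    nsmul_eq_mul] at split
  rw [← total, split]
  ring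

end Finset

lemma one_add_pow_sub_one_sub_mul_le_sq {n : ℕ} {a : ℝ} (ha : 0 ≤ a) (hna : n * a ≤ 1) :
    (1 + a) ^ n - 1 - n * a ≤ (n * a) ^ 2 := by
  have pow_le_exp : (1 + a) ^ n ≤ Real.exp (n * a) := by
    rw [Real.exp_nat_mul, add_comm]
    gcongr
    exact Real.add_one_le_exp a
  have abs_le_one : |n * a| ≤ 1 := by rwa [abs_of_nonneg (by positivity)]
  have exp_le := (le_abs_self _).trans (Real.abs_exp_sub_one_sub_id_le abs_le_one)
  linarith

lemma mul_sq_le_one_of_abs_le_one_div_sqrt {a x : ℝ} (ha : 0 ≤ a) (hx : |x| ≤ 1 / √a) :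
    a * x ^ 2 ≤ 1 :=
  calc a * x ^ 2 = a * |x| ^ 2 := by rw [sq_abs]
    _ ≤ a * (1 / √a) ^ 2 := by gcongr
    _ = a / a := by rw [div_pow, Real.sq_sqrt ha, one_pow, mul_one_div]
    _ ≤ 1 := div_self_le_one a

lemma sum_sq_le_card {α : Type*} [Fintype α] {f : α → ℝ} (hf : ∀ x, f x ∈ Set.Icc (-1 : ℝ) 1) :
    ∑ x, f x ^ 2 ≤ Fintype.card α := by
  have sq_le_one (x : α) : f x ^ 2 ≤ 1 := (sq_le_one_iff_abs_le_one _).2 (abs_le.2 (hf x))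
  simpa using sum_le_card_nsmul univ (fun x ↦ f x ^ 2) 1 fun x _ ↦ sq_le_one x

lemma one_add_sgn_mul_sgn (a b : Bool) : 1 + sgn a * sgn b = if a = b then 2 else 0 := by
  cases a <;> cases b <;> norm_num [sgn]

lemma sum_prod_sgn_mul_prod_sgn {ι : Type*} [Fintype ι] (x y : ι → Bool) :
    ∑ S : Finset ι, (∏ i ∈ S, sgn (x i)) * ∏ i ∈ S, sgn (y i) =
      if x = y then 2 ^ Fintype.card ι else 0 := by
  simp only [← prod_mul_distrib, ← powerset_univ, ← prod_one_add, one_add_sgn_mul_sgn,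
    prod_ite_zero, prod_const, card_univ, mem_univ, true_imp_iff, funext_iff]

section Walsh

variable {n : ℕ} (f : (Fin n → Bool) → ℝ)

theorem sum_walshCoeff_sq : ∑ S, walshCoeff f S ^ 2 = (2 ^ n : ℝ)⁻¹ * ∑ x, f x ^ 2 :=
  calc ∑ S, walshCoeff f S ^ 2
      = (2 ^ n : ℝ)⁻¹ ^ 2 * ∑ S : Finset (Fin n), ∑ x, ∑ y,
          f x * f y * ((∏ i ∈ S, sgn (x i)) * ∏ i ∈ S, sgn (y i)) := by
        simp only [walshCoeff, mul_pow, ← mul_sum, sq (∑ _, _), sum_mul_sum, mul_mul_mul_comm]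
    _ = (2 ^ n : ℝ)⁻¹ ^ 2 * ∑ x, ∑ y, f x * f y *
          ∑ S : Finset (Fin n), (∏ i ∈ S, sgn (x i)) * ∏ i ∈ S, sgn (y i) := by
        rw [sum_comm]
        simp only [mul_sum]
        exact sum_congr rfl fun _ _ ↦ sum_comm
    _ = (2 ^ n : ℝ)⁻¹ ^ 2 * ∑ x, f x * f x * 2 ^ n := by
        simp only [sum_prod_sgn_mul_prod_sgn, mul_ite, mul_zero, sum_ite_eq, mem_univ, if_true,
          Fintype.card_fin]
    _ = (2 ^ n : ℝ)⁻¹ * ∑ x, f x ^ 2 := by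
        rw [← sum_mul]
        simp only [← sq]
        field_simp

theorem biasedExp_eq_sum_walshCoeff (ε : ℝ) :
    biasedExp f ε = ∑ S, ε ^ #S * walshCoeff f S := by
  have density (x : Fin n → Bool) : ∏ i, (1 + ε * sgn (x i)) / 2 =
      (2 ^ n : ℝ)⁻¹ * ∑ S : Finset (Fin n), ε ^ #S * ∏ i ∈ S, sgn (x i) := by
    rw [prod_div_distrib, prod_one_add, powerset_univ]
    simp [prod_mul_distrib, div_eq_inv_mul]
  simp only [biasedExp, walshCoeff, density, mul_sum]
  rw [sum_comm]
  congr! 2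
  ring

lemma biasedExp_sub_biasedExp_zero (ε : ℝ) :
    biasedExp f ε - biasedExp f 0 =
      ε * ∑ i, walshCoeff f {i} + ∑ S with 2 ≤ #S, ε ^ #S * walshCoeff f S := by
  have at_zero : biasedExp f 0 = walshCoeff f ∅ := by
    simp [biasedExp_eq_sum_walshCoeff, zero_pow_eq]
  rw [at_zero, biasedExp_eq_sum_walshCoeff, sum_finset_eq_empty_add_singleton_add_two_le_card]
  simp only [card_empty, pow_zero, one_mul, card_singleton, pow_one, ← mul_sum]
  ring

lemma sq_sum_two_le_card_walshCoeff_le (ε : ℝ) :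
    (∑ S with 2 ≤ #S, ε ^ #S * walshCoeff f S) ^ 2 ≤
      ((1 + ε ^ 2) ^ n - 1 - n * ε ^ 2) * ((2 ^ n : ℝ)⁻¹ * ∑ x, f x ^ 2) := by
  have tail_weight : ∑ S : Finset (Fin n) with 2 ≤ #S, (ε ^ #S) ^ 2 =
      (1 + ε ^ 2) ^ n - 1 - n * ε ^ 2 := by
    simpa only [pow_right_comm ε _ 2, Fintype.card_fin] using
      sum_pow_card_two_le_card (ι := Fin n) (ε ^ 2)
  rw [← tail_weight, ← sum_walshCoeff_sq]
  refine (sum_mul_sq_le_sq_mul_sq _ _ _).trans ?_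
  gcongr
  exact filter_subset _ _

variable {f}

lemma abs_sum_two_le_card_walshCoeff_le (hf : ∑ x, f x ^ 2 ≤ 2 ^ n) {ε : ℝ}
    (hε : n * ε ^ 2 ≤ 1) : |∑ S with 2 ≤ #S, ε ^ #S * walshCoeff f S| ≤ n * ε ^ 2 := by
  refine abs_le_of_sq_le_sq ?_ (by positivity)
  have mean_sq_le_one : (2 ^ n : ℝ)⁻¹ * ∑ x, f x ^ 2 ≤ 1 :=
    inv_mul_le_one_of_le₀ hf (by positivity)
  calc (∑ S with 2 ≤ #S, ε ^ #S * walshCoeff f S) ^ 2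
      ≤ ((1 + ε ^ 2) ^ n - 1 - n * ε ^ 2) * ((2 ^ n : ℝ)⁻¹ * ∑ x, f x ^ 2) :=
        sq_sum_two_le_card_walshCoeff_le f ε
    _ ≤ (n * ε ^ 2) ^ 2 * 1 := by
        gcongr
        exact one_add_pow_sub_one_sub_mul_le_sq (sq_nonneg ε) hε
    _ = (n * ε ^ 2) ^ 2 := mul_one _

theorem coin_of_fourier_sum_general {t : ℝ} (hf : ∑ x, f x ^ 2 ≤ 2 ^ n)
    (hsum : |∑ i, walshCoeff f {i}| ≤ t) {ε : ℝ} (hε : n * ε ^ 2 ≤ 1) :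
    |biasedExp f ε - biasedExp f 0| ≤ |ε| * (t + |ε| * n) :=
  calc |biasedExp f ε - biasedExp f 0|
      = |ε * ∑ i, walshCoeff f {i} + ∑ S with 2 ≤ #S, ε ^ #S * walshCoeff f S| := by
        rw [biasedExp_sub_biasedExp_zero]
    _ ≤ |ε| * |∑ i, walshCoeff f {i}| + |∑ S with 2 ≤ #S, ε ^ #S * walshCoeff f S| := by
        rw [← abs_mul]
        exact abs_add_le _ _
    _ ≤ |ε| * t + n * ε ^ 2 := by
        gcongr
        exact abs_sum_two_le_card_walshCoeff_le hf hε
    _ = |ε| * (t + |ε| * n) := by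
        rw [← sq_abs ε]
        ring

end Walsh

/-- if f : {-1,1}^n → [-1,1] has |∑_i f̂({i})| ≤ t, then for all
|ε| ≤ 1/√n, |E_ε[f] − E_0[f]| ≤ |ε|·(t + |ε|·n). -/
theorem coin_of_fourier_sum (n : ℕ) (hn : 0 < n) (t : ℝ) (ht : 0 ≤ t)
    (f : (Fin n → Bool) → ℝ) (hf : ∀ x, f x ∈ Set.Icc (-1 : ℝ) 1)
    (hsum : |∑ i : Fin n, walshCoeff f {i}| ≤ t)
    (ε : ℝ) (hε : |ε| ≤ 1 / Real.sqrt n) :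
    |biasedExp f ε - biasedExp f 0| ≤ |ε| * (t + |ε| * n) :=
  coin_of_fourier_sum_general (by simpa using sum_sq_le_card hf) hsum
    (mul_sq_le_one_of_abs_le_one_div_sqrt n.cast_nonneg hε)
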